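/- Let σ' : ℰ → (0,∞), σ'' : ℰ → ℝ, and ω₁ ∈ ℝ with ω₁ ≠ 0; set σ := σ' + iω₁σ''. Let u₀⁽ʲ⁾ : 𝒱 → ℝ and u₁⁽ʲ⁾ : 𝒱 → ℂ, j = 1,…,N, satisfy (∇ᵀ(σ' ⊙ ∇u₀⁽ʲ⁾))_ℐ = 0 and (∇ᵀ(σ ⊙ ∇u₁⁽ʲ⁾))_ℐ = 0. Assume: (a) the hypotheses of the real-conductivity local-uniqueness theorem hold for σ' and the u₀⁽ʲ⁾, namely ⋃_j supp ∇u₀⁽ʲ⁾ = ℰ, (L_{σ'})_ℐℐ is invertible, and (L_{s⁽ʲ⁾⊙σ'})_ℐℐ is invertible with s⁽ʲ⁾ = 1 − 2·1_{supp ∇u₀⁽ʲ⁾}; (b) (L_σ)_ℐℐ is invertible; (c) with A⁽ʲ⁾ := −i diag(conj(∇u₁⁽ʲ⁾)) ∇ R_ℐᵀ ((L_σ)_ℐℐ)⁻¹ R_ℐ ∇ᵀ diag(∇u₁⁽ʲ⁾), the real matrix Re([A⁽¹⁾; … ; A⁽ᴺ⁾]) (vertical concatenation of real parts) has trivial nullspace.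 Then the linearized two-frequency inverse complex-conductivity problem from dissipated power is injective: if δσ', δσ'' : ℰ → ℝ, δu₀⁽ʲ⁾ : 𝒱 → ℝ, δu₁⁽ʲ⁾ : 𝒱 → ℂ satisfy, for all j, (δu₀⁽ʲ⁾)_ℬ = 0, (δu₁⁽ʲ⁾)_ℬ = 0, |∇u₀⁽ʲ⁾|² ⊙ δσ' + 2σ' ⊙ (∇u₀⁽ʲ⁾) ⊙ (∇δu₀⁽ʲ⁾) = 0, (∇ᵀ((∇u₀⁽ʲ⁾) ⊙ δσ'))_ℐ + (L_{σ'} δu₀⁽ʲ⁾)_ℐ = 0, δσ' ⊙ |∇u₁⁽ʲ⁾|² + σ' ⊙ conj(∇u₁⁽ʲ⁾) ⊙ ∇δu₁⁽ʲ⁾ + σ' ⊙ (∇u₁⁽ʲ⁾) ⊙ conj(∇δu₁⁽ʲ⁾) = 0, and (∇ᵀ((∇u₁⁽ʲ⁾) ⊙ (δσ' + iω₁δσ'')))_ℐ + (L_σ δu₁⁽ʲ⁾)_ℐ = 0, then δσ' = 0, δσ'' = 0, δu₀⁽ʲ⁾ = 0 and δu₁⁽ʲ⁾ = 0 for all j.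 -/

import Mathlib

open Matrix

noncomputable section

variable {E B I : Type*} [Fintype E] [Fintype B] [Fintype I]
  [DecidableEq E] [DecidableEq B] [DecidableEq I]

/-- Discrete gradient of an oriented graph whose edge `e` goes from node `tail e`
to node `head e`, so that `(dGrad R head tail *ᵥ u) e = u (head e) - u (tail e)`.
The node set is `𝒱 = B ⊕ I`, with boundary nodes `B` and interior nodes `I`. -/
def dGrad (R : Type*) [Ring R] (head tail : E → B ⊕ I) : Matrix E (B ⊕ I) R :=
  Matrix.of fun e v => (if v = head e then 1 else 0) - (if v = tail e then 1 else 0)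

/-- The weighted graph Laplacian `L_w = ∇ᵀ diag(w) ∇`. -/
def dLap (R : Type*) [CommRing R] (head tail : E → B ⊕ I) (w : E → R) :
    Matrix (B ⊕ I) (B ⊕ I) R :=
  (dGrad R head tail)ᵀ * Matrix.diagonal w * dGrad R head tail

/-- The restriction matrix `R_ℐ` from vectors on `𝒱 = B ⊕ I` to vectors on `I`;
its transpose extends by zero. -/
def RImat (R : Type*) [Ring R] : Matrix I (B ⊕ I) R :=
  Matrix.of fun i v => if v = Sum.inr i then 1 else 0

/-!
On every edge the real power equation says that `∇u₀ ⊙ δσ'` vanishes together with `∇u₀` or equals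
`-2 σ' ⊙ ∇δu₀`, so it turns the linearized current balance into `(L_{s ⊙ σ'} δu₀)_ℐ = 0`. Hence
`δu₀ = 0`, and then `δσ' = 0` on `supp ∇u₀`. At the frequency `ω₁` the perturbation of the
conductivity is now the purely imaginary `i x` with `x = ω₁ δσ''`. Solving the current balance for
`δu₁` gives `conj(∇u₁) ⊙ ∇δu₁ = A x`, whose real part vanishes by the power equation. So `x = 0`,
and the balance now reads `(L_σ δu₁)_ℐ = 0`.
-/

lemma diagonal_mulVec_eq_mul {n R : Type*} [Fintype n] [DecidableEq n]
    [NonUnitalNonAssocSemiring R] (v w : n → R) : diagonal v *ᵥ w = v * w :=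
  funext (mulVec_diagonal v w)

section DirichletProblem

variable {m n R : Type*} [Fintype n]

lemma RImat_transpose_mulVec [DecidableEq m] [DecidableEq n] [Ring R] (v : n → R) :
    (RImat R : Matrix n (m ⊕ n) R)ᵀ *ᵥ v = Sum.elim (0 : m → R) v := by
  ext (b | i) <;> simp [RImat, mulVec, dotProduct]

variable [Fintype m]

lemma submatrix_inr_mulVec {k l : Type*} [NonUnitalNonAssocSemiring R] (M : Matrix l (m ⊕ n) R)
    (f : k → l) {v : m ⊕ n → R} (hv : v ∘ Sum.inl = 0) :
    M.submatrix f Sum.inr *ᵥ (v ∘ Sum.inr) = (M *ᵥ v) ∘ f := by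
  have hv_inl (b : m) : v (Sum.inl b) = 0 := congrFun hv b
  ext i
  simp [mulVec, dotProduct, hv_inl]

variable [DecidableEq n]

lemma RImat_mulVec [DecidableEq m] [Ring R] (v : m ⊕ n → R) :
    (RImat R : Matrix n (m ⊕ n) R) *ᵥ v = v ∘ Sum.inr := by
  ext i
  simp [RImat, mulVec, dotProduct]

lemma eq_neg_RImat_transpose_mulVec_inv_mulVec [DecidableEq m] [CommRing R]
    {M : Matrix (m ⊕ n) (m ⊕ n) R} (hM : IsUnit (M.submatrix Sum.inr Sum.inr : Matrix n n R))
    {f v : m ⊕ n → R} (hv : v ∘ Sum.inl = 0) (h : f ∘ Sum.inr + (M *ᵥ v) ∘ Sum.inr = 0) :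
    v = -((RImat R)ᵀ *ᵥ
      (M.submatrix Sum.inr Sum.inr : Matrix n n R)⁻¹ *ᵥ (RImat R *ᵥ f)) := by
  set S : Matrix n n R := M.submatrix Sum.inr Sum.inr
  have hS : S *ᵥ (v ∘ Sum.inr) = -(f ∘ Sum.inr) := by
    rw [submatrix_inr_mulVec M _ hv]
    exact eq_neg_of_add_eq_zero_right h
  have hv_inr : v ∘ Sum.inr = -(S⁻¹ *ᵥ (f ∘ Sum.inr)) := by
    rw [← mulVec_neg, ← hS, mulVec_mulVec, nonsing_inv_mul _ ((isUnit_iff_isUnit_det S).1 hM),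
      one_mulVec]
  rw [RImat_mulVec, ← mulVec_neg, ← hv_inr, RImat_transpose_mulVec, ← hv,
    Sum.elim_comp_inl_inr]

lemma eq_zero_of_interior_mulVec_eq_zero [CommRing R]
    {M : Matrix (m ⊕ n) (m ⊕ n) R} (hM : IsUnit (M.submatrix Sum.inr Sum.inr : Matrix n n R))
    {v : m ⊕ n → R} (hv : v ∘ Sum.inl = 0) (h : (M *ᵥ v) ∘ Sum.inr = 0) : v = 0 := by
  classical
  have h' : (0 : m ⊕ n → R) ∘ Sum.inr + (M *ᵥ v) ∘ Sum.inr = 0 := by simp [h]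
  simpa only [mulVec_zero, neg_zero] using eq_neg_RImat_transpose_mulVec_inv_mulVec hM hv h'

end DirichletProblem

lemma dLap_mulVec {R : Type*} [CommRing R] (head tail : E → B ⊕ I) (w : E → R)
    (v : B ⊕ I → R) :
    dLap R head tail w *ᵥ v = (dGrad R head tail)ᵀ *ᵥ (w * (dGrad R head tail *ᵥ v)) := by
  rw [dLap, ← mulVec_mulVec, ← mulVec_mulVec, diagonal_mulVec_eq_mul]

section RealConductivity

/-- The sign pattern `1 - 2 · 1_{supp g}`, that is `-1` on the support of `g` and `1` off it. It
is the vector `s⁽ʲ⁾` of the real-conductivity problem when `g = ∇u₀⁽ʲ⁾`. -/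
def supportSign {X R : Type*} [Ring R] [DecidableEq R] (g : X → R) : X → R :=
  fun e => 1 - 2 * (if g e ≠ 0 then 1 else 0)

variable {R : Type*} [CommRing R] [NoZeroDivisors R] [DecidableEq R]

lemma mul_add_mul_eq_supportSign_mul {X : Type*} {g δg w δw : X → R}
    (h : ∀ e, g e ^ 2 * δw e + 2 * w e * g e * δg e = 0) :
    g * δw + w * δg = supportSign g * w * δg := by
  ext e
  by_cases hg : g e = 0
  · simp [supportSign, hg]
  · have hcancel : g e * δw e + 2 * w e * δg e = 0 := by
      refine (mul_eq_zero.1 ?_).resolve_left hg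
      linear_combination h e
    simp only [Pi.add_apply, Pi.mul_apply, supportSign, ne_eq, hg, not_false_eq_true, if_true]
    linear_combination hcancel

theorem real_conductivity_linearization_injective {ι : Type*} {head tail : E → B ⊕ I}
    {σ δσ : E → R} {u δu : ι → B ⊕ I → R}
    (hcover : ∀ e, ∃ j, (dGrad R head tail *ᵥ u j) e ≠ 0)
    (hinv : ∀ j, IsUnit ((dLap R head tail (supportSign (dGrad R head tail *ᵥ u j) * σ)).submatrix
      Sum.inr Sum.inr : Matrix I I R))
    (hboundary : ∀ j, δu j ∘ Sum.inl = 0)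
    (hpower : ∀ j e, (dGrad R head tail *ᵥ u j) e ^ 2 * δσ e +
      2 * σ e * (dGrad R head tail *ᵥ u j) e * (dGrad R head tail *ᵥ δu j) e = 0)
    (hcurrent : ∀ j, ((dGrad R head tail)ᵀ *ᵥ ((dGrad R head tail *ᵥ u j) * δσ)) ∘ Sum.inr +
      (dLap R head tail σ *ᵥ δu j) ∘ Sum.inr = 0) :
    δσ = 0 ∧ ∀ j, δu j = 0 := by
  have hδu (j : ι) : δu j = 0 := by
    refine eq_zero_of_interior_mulVec_eq_zero (hinv j) (hboundary j) ?_
    rw [dLap_mulVec, ← mul_add_mul_eq_supportSign_mul (hpower j), mulVec_add, ← dLap_mulVec]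
    exact hcurrent j
  refine ⟨funext fun e => ?_, hδu⟩
  obtain ⟨j, hj⟩ := hcover e
  simpa [hδu j, hj] using hpower j e

end RealConductivity

section ComplexConductivity

open ComplexConjugate

/-- The matrix `A = -i diag(conj ∇u) ∇ R_ℐᵀ ((L_w)_ℐℐ)⁻¹ R_ℐ ∇ᵀ diag(∇u)`. It sends `x` to
`conj(∇u) ⊙ ∇δu`, where `δu` is the change of the potential `u` caused by the change `i x` of the
conductivity `w`. -/
def powerSensitivity (head tail : E → B ⊕ I) (w : E → ℂ) (u : B ⊕ I → ℂ) : Matrix E E ℂ :=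
  (-Complex.I) •
    (diagonal (fun e => conj ((dGrad ℂ head tail *ᵥ u) e)) *
      dGrad ℂ head tail * (RImat ℂ : Matrix I (B ⊕ I) ℂ)ᵀ *
      ((dLap ℂ head tail w).submatrix Sum.inr Sum.inr)⁻¹ *
      (RImat ℂ : Matrix I (B ⊕ I) ℂ) * (dGrad ℂ head tail)ᵀ *
      diagonal (fun e => (dGrad ℂ head tail *ᵥ u) e))

lemma powerSensitivity_mulVec {head tail : E → B ⊕ I} {w x : E → ℂ} {u δu : B ⊕ I → ℂ}
    (hinv : IsUnit ((dLap ℂ head tail w).submatrix Sum.inr Sum.inr : Matrix I I ℂ))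
    (hboundary : δu ∘ Sum.inl = 0)
    (hcurrent : ((dGrad ℂ head tail)ᵀ *ᵥ
        ((dGrad ℂ head tail *ᵥ u) * (Complex.I • x))) ∘ Sum.inr +
      (dLap ℂ head tail w *ᵥ δu) ∘ Sum.inr = 0) (e : E) :
    (powerSensitivity head tail w u *ᵥ x) e =
      conj ((dGrad ℂ head tail *ᵥ u) e) * (dGrad ℂ head tail *ᵥ δu) e := by
  have hδu := eq_neg_RImat_transpose_mulVec_inv_mulVec hinv hboundary hcurrent
  rw [hδu, mul_smul_comm, ← diagonal_mulVec_eq_mul]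
  simp only [powerSensitivity, smul_mulVec, ← mulVec_mulVec, mulVec_neg, mulVec_smul,
    Pi.smul_apply, Pi.neg_apply, smul_eq_mul, mulVec_diagonal]
  ring

lemma map_re_mulVec {m n : Type*} [Fintype n] (M : Matrix m n ℂ) (x : n → ℝ) (i : m) :
    (M.map Complex.re *ᵥ x) i = ((M *ᵥ fun k => (x k : ℂ)) i).re := by
  simp [mulVec, dotProduct]

lemma re_conj_mul_eq_zero {r : ℝ} (hr : r ≠ 0) {z w : ℂ}
    (h : (r : ℂ) * conj z * w + (r : ℂ) * z * conj w = 0) : (conj z * w).re = 0 := by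
  have hsum : (r : ℂ) * (conj z * w + conj (conj z * w)) = 0 := by
    rw [map_mul, Complex.conj_conj]
    linear_combination h
  rw [Complex.add_conj] at hsum
  have hre : r * (2 * (conj z * w).re) = 0 := by exact_mod_cast hsum
  simpa only [mul_eq_zero, hr, OfNat.ofNat_ne_zero, false_or] using hre

theorem imaginary_perturbation_eq_zero {ι : Type*} {head tail : E → B ⊕ I}
    {r : E → ℝ} (hr : ∀ e, r e ≠ 0) {w : E → ℂ} {u δu : ι → B ⊕ I → ℂ} {x : E → ℝ}
    (hinv : IsUnit ((dLap ℂ head tail w).submatrix Sum.inr Sum.inr : Matrix I I ℂ))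
    (hnull : ∀ y : E → ℝ,
      (∀ j, (powerSensitivity head tail w (u j)).map Complex.re *ᵥ y = 0) → y = 0)
    (hboundary : ∀ j, δu j ∘ Sum.inl = 0)
    (hpower : ∀ j e,
      (r e : ℂ) * conj ((dGrad ℂ head tail *ᵥ u j) e) * (dGrad ℂ head tail *ᵥ δu j) e +
      (r e : ℂ) * (dGrad ℂ head tail *ᵥ u j) e * conj ((dGrad ℂ head tail *ᵥ δu j) e) = 0)
    (hcurrent : ∀ j, ((dGrad ℂ head tail)ᵀ *ᵥ
        ((dGrad ℂ head tail *ᵥ u j) * (Complex.I • fun e => (x e : ℂ)))) ∘ Sum.inr +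
      (dLap ℂ head tail w *ᵥ δu j) ∘ Sum.inr = 0) :
    x = 0 ∧ ∀ j, δu j = 0 := by
  obtain rfl : x = 0 := hnull x fun j => funext fun e => by
    rw [map_re_mulVec, powerSensitivity_mulVec hinv (hboundary j) (hcurrent j)]
    exact re_conj_mul_eq_zero (hr e) (hpower j e)
  refine ⟨rfl, fun j => eq_zero_of_interior_mulVec_eq_zero hinv (hboundary j) ?_⟩
  have hzero : (Complex.I • fun e => (((0 : E → ℝ) e : ℝ) : ℂ)) = 0 := by ext; simp
  simpa only [hzero, mul_zero, mulVec_zero, Pi.zero_comp, zero_add] using hcurrent j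

/-- The complex conductivity `σ' + i ω σ''` at the frequency `ω`. -/
def complexConductivity {X : Type*} (ω : ℝ) (σ' σ'' : X → ℝ) : X → ℂ :=
  fun e => (σ' e : ℂ) + (ω : ℂ) * (σ'' e : ℂ) * Complex.I

lemma complexConductivity_zero_left {X : Type*} (ω : ℝ) (σ'' : X → ℝ) :
    complexConductivity ω 0 σ'' = Complex.I • fun e => (((ω • σ'') e : ℝ) : ℂ) := by
  ext e
  simp [complexConductivity, mul_comm]

theorem complex_conductivity_linearization_injective_general {ι : Type*}
    {head tail : E → B ⊕ I} {σ' σ'' : E → ℝ} (hσ' : ∀ e, σ' e ≠ 0) {ω₁ : ℝ} (hω₁ : ω₁ ≠ 0)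
    {u₀ : ι → B ⊕ I → ℝ} {u₁ : ι → B ⊕ I → ℂ}
    (hcover : ∀ e, ∃ j, (dGrad ℝ head tail *ᵥ u₀ j) e ≠ 0)
    (hinvs : ∀ j, IsUnit ((dLap ℝ head tail
      (supportSign (dGrad ℝ head tail *ᵥ u₀ j) * σ')).submatrix Sum.inr Sum.inr : Matrix I I ℝ))
    (hinvc : IsUnit ((dLap ℂ head tail (complexConductivity ω₁ σ' σ'')).submatrix
      Sum.inr Sum.inr : Matrix I I ℂ))
    (hnull : ∀ x : E → ℝ, (∀ j, (powerSensitivity head tail (complexConductivity ω₁ σ' σ'')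
      (u₁ j)).map Complex.re *ᵥ x = 0) → x = 0)
    {δσ' δσ'' : E → ℝ} {δu₀ : ι → B ⊕ I → ℝ} {δu₁ : ι → B ⊕ I → ℂ}
    (hboundary₀ : ∀ j, δu₀ j ∘ Sum.inl = 0) (hboundary₁ : ∀ j, δu₁ j ∘ Sum.inl = 0)
    (hpower₀ : ∀ j e, (dGrad ℝ head tail *ᵥ u₀ j) e ^ 2 * δσ' e +
      2 * σ' e * (dGrad ℝ head tail *ᵥ u₀ j) e * (dGrad ℝ head tail *ᵥ δu₀ j) e = 0)
    (hcurrent₀ : ∀ j, ((dGrad ℝ head tail)ᵀ *ᵥ ((dGrad ℝ head tail *ᵥ u₀ j) * δσ')) ∘ Sum.inr +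
      (dLap ℝ head tail σ' *ᵥ δu₀ j) ∘ Sum.inr = 0)
    (hpower₁ : ∀ j e, (δσ' e : ℂ) * ((‖(dGrad ℂ head tail *ᵥ u₁ j) e‖ : ℝ) : ℂ) ^ 2 +
      (σ' e : ℂ) * conj ((dGrad ℂ head tail *ᵥ u₁ j) e) * (dGrad ℂ head tail *ᵥ δu₁ j) e +
      (σ' e : ℂ) * (dGrad ℂ head tail *ᵥ u₁ j) e * conj ((dGrad ℂ head tail *ᵥ δu₁ j) e) = 0)
    (hcurrent₁ : ∀ j, ((dGrad ℂ head tail)ᵀ *ᵥ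
        ((dGrad ℂ head tail *ᵥ u₁ j) * complexConductivity ω₁ δσ' δσ'')) ∘ Sum.inr +
      (dLap ℂ head tail (complexConductivity ω₁ σ' σ'') *ᵥ δu₁ j) ∘ Sum.inr = 0) :
    δσ' = 0 ∧ δσ'' = 0 ∧ (∀ j, δu₀ j = 0) ∧ (∀ j, δu₁ j = 0) := by
  obtain ⟨rfl, hδu₀⟩ :=
    real_conductivity_linearization_injective hcover hinvs hboundary₀ hpower₀ hcurrent₀
  simp only [complexConductivity_zero_left] at hcurrent₁
  simp only [Pi.zero_apply, Complex.ofReal_zero, zero_mul, zero_add] at hpower₁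
  obtain ⟨hx, hδu₁⟩ :=
    imaginary_perturbation_eq_zero hσ' hinvc hnull hboundary₁ hpower₁ hcurrent₁
  exact ⟨rfl, (smul_eq_zero.1 hx).resolve_left hω₁, hδu₀, hδu₁⟩

end ComplexConductivity

/-- local uniqueness for the two-frequency inverse complex-conductivity
problem from dissipated power measurements. -/
theorem complex_conductivity_linearization_injective
    (head tail : E → B ⊕ I) (hloop : ∀ e, head e ≠ tail e)
    (σ' : E → ℝ) (hσ' : ∀ e, 0 < σ' e) (σ'' : E → ℝ) (ω₁ : ℝ) (hω₁ : ω₁ ≠ 0)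
    (σc : E → ℂ) (hσc : σc = fun e => (σ' e : ℂ) + (ω₁ : ℂ) * (σ'' e : ℂ) * Complex.I)
    (N : ℕ) (u₀ : Fin N → B ⊕ I → ℝ) (u₁ : Fin N → B ⊕ I → ℂ)
    (hu₀ : ∀ j, (((dGrad ℝ head tail)ᵀ *ᵥ fun e => σ' e * (dGrad ℝ head tail *ᵥ u₀ j) e) ∘
      Sum.inr) = 0)
    (hu₁ : ∀ j, (((dGrad ℂ head tail)ᵀ *ᵥ fun e => σc e * (dGrad ℂ head tail *ᵥ u₁ j) e) ∘
      Sum.inr) = 0)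
    -- (a) hypotheses of the real-conductivity local-uniqueness theorem for σ' and u₀
    (s : Fin N → E → ℝ)
    (hs : ∀ j e, s j e = 1 - 2 * (if (dGrad ℝ head tail *ᵥ u₀ j) e ≠ 0 then 1 else 0))
    (hcover : ∀ e : E, ∃ j, (dGrad ℝ head tail *ᵥ u₀ j) e ≠ 0)
    (hinv : IsUnit ((dLap ℝ head tail σ').submatrix Sum.inr Sum.inr))
    (hinvs : ∀ j, IsUnit
      ((dLap ℝ head tail (fun e => s j e * σ' e)).submatrix Sum.inr Sum.inr))
    -- (b) invertibility at the nonzero frequency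
    (hinvc : IsUnit ((dLap ℂ head tail σc).submatrix Sum.inr Sum.inr))
    -- (c) the real part of the stacked matrices A⁽ʲ⁾ has trivial nullspace
    (A : Fin N → Matrix E E ℂ)
    (hA : ∀ j, A j = (-Complex.I) •
      (Matrix.diagonal (fun e => starRingEnd ℂ ((dGrad ℂ head tail *ᵥ u₁ j) e)) *
        dGrad ℂ head tail * (RImat ℂ : Matrix I (B ⊕ I) ℂ)ᵀ *
        ((dLap ℂ head tail σc).submatrix Sum.inr Sum.inr)⁻¹ *
        (RImat ℂ : Matrix I (B ⊕ I) ℂ) * (dGrad ℂ head tail)ᵀ *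
        Matrix.diagonal (fun e => (dGrad ℂ head tail *ᵥ u₁ j) e)))
    (hfullrank : ∀ x : E → ℝ,
      (∀ j, (Matrix.of fun e e' => (A j e e').re) *ᵥ x = 0) → x = 0)
    -- the linearized equations
    (δσ' δσ'' : E → ℝ) (δu₀ : Fin N → B ⊕ I → ℝ) (δu₁ : Fin N → B ⊕ I → ℂ)
    (h2a : ∀ j, δu₀ j ∘ Sum.inl = 0)
    (h2b : ∀ j, δu₁ j ∘ Sum.inl = 0)
    (h3 : ∀ j e, ((dGrad ℝ head tail *ᵥ u₀ j) e) ^ 2 * δσ' e +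
      2 * σ' e * (dGrad ℝ head tail *ᵥ u₀ j) e * (dGrad ℝ head tail *ᵥ δu₀ j) e = 0)
    (h4 : ∀ j, (((dGrad ℝ head tail)ᵀ *ᵥ fun e => (dGrad ℝ head tail *ᵥ u₀ j) e * δσ' e) ∘
        Sum.inr) + (dLap ℝ head tail σ' *ᵥ δu₀ j) ∘ Sum.inr = 0)
    (h5 : ∀ j e, (δσ' e : ℂ) * ((‖(dGrad ℂ head tail *ᵥ u₁ j) e‖ : ℝ) : ℂ) ^ 2 +
      (σ' e : ℂ) * starRingEnd ℂ ((dGrad ℂ head tail *ᵥ u₁ j) e) *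
        (dGrad ℂ head tail *ᵥ δu₁ j) e +
      (σ' e : ℂ) * (dGrad ℂ head tail *ᵥ u₁ j) e *
        starRingEnd ℂ ((dGrad ℂ head tail *ᵥ δu₁ j) e) = 0)
    (h6 : ∀ j, (((dGrad ℂ head tail)ᵀ *ᵥ fun e =>
        (dGrad ℂ head tail *ᵥ u₁ j) e * ((δσ' e : ℂ) + (ω₁ : ℂ) * (δσ'' e : ℂ) * Complex.I)) ∘
        Sum.inr) + (dLap ℂ head tail σc *ᵥ δu₁ j) ∘ Sum.inr = 0) :
    δσ' = 0 ∧ δσ'' = 0 ∧ (∀ j, δu₀ j = 0) ∧ (∀ j, δu₁ j = 0) := by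
  obtain rfl : s = fun j => supportSign (dGrad ℝ head tail *ᵥ u₀ j) := funext₂ hs
  obtain rfl := funext hA
  subst hσc
  exact complex_conductivity_linearization_injective_general (fun e => (hσ' e).ne') hω₁
    hcover hinvs hinvc hfullrank h2a h2b h3 h4 h5 h6
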